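/- Let (X, μ) be a σ-finite measure space and fix a positive class prior π_p ∈ (0,1). Let p_p, p_n, p_g : X → ℝ be nonnegative measurable functions with ∫ p_p dμ = ∫ p_n dμ = ∫ p_g dμ = 1 and with, for μ-a.e. x, p_p(x) > 0 and (1 − π_p)·p_n(x) + p_g(x) > 0. Define p_u := π_p·p_p + (1 − π_p)·p_n and D*(x) := π_p·p_p(x)/(p_u(x) + p_g(x)). Assume the functions x ↦ p_p(x)·log(p_p(x)/((p_u(x)+p_g(x))/2)) and x ↦ (((1 − π_p)·p_n(x) + p_g(x))/(2 − π_p))·log((((1 − π_p)·p_n(x) + p_g(x))/(2 − π_p))/((p_u(x)+p_g(x))/2)) are μ-integrable. Then V(D*) = −2·H(π_p/2) if and only if p_p(x) = (p_u(x) + p_g(x))/2 for μ-a.e. x; moreover, when this holds, D*(x) = π_p/2 for μ-a.e. x. Here V(D*) := ∫_X [π_p·p_p(x)·log(D*(x)) + ((1 − π_p)·p_n(x) + p_g(x))·log(1 − D*(x))] dμ(x). (Global optimum: the minimum −2·H(π_p/2) is achieved if and only if p_p = (p_u + p_g)/2, and at that point the discriminator value reaches π_p/2.) -/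

import Mathlib

open MeasureTheory Real

/-!
Let `a = π_p p_p` and `b = (1 - π_p) p_n + p_g`, so that `D* = a / (a + b)`. Pointwise,
`a log D* + b log (1 - D*) = -(a + b) H(D*)`, whence `V(D*) = -∫ H(D*) dν` for the measure
`dν = (a + b) dμ`, which has total mass `2` and gives `D*` the mean `π_p / 2`. Since `H` is strictly
concave, Jensen's inequality yields `∫ H(D*) dν ≤ 2 H(π_p / 2)`, with equality only if `D*` equals
its mean `ν`-almost everywhere, that is, if `a = (π_p / 2) (a + b)` `μ`-almost everywhere.
-/

section Jensen

variable {X E : Type*} [MeasurableSpace X] {μ : Measure X}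
  [NormedAddCommGroup E] [NormedSpace ℝ E] {s : Set E} {f : X → E} {g : E → ℝ} {w : X → ℝ}

theorem average_comp_eq_map_average_iff_of_strictConcaveOn [CompleteSpace E] [IsFiniteMeasure μ]
    [NeZero μ] (hg : StrictConcaveOn ℝ s g) (hgc : ContinuousOn g s) (hs : IsClosed s)
    (hfs : ∀ᵐ x ∂μ, f x ∈ s) (hf : Integrable f μ) (hgf : Integrable (g ∘ f) μ) :
    ⨍ x, g (f x) ∂μ = g (⨍ x, f x ∂μ) ↔ ∀ᵐ x ∂μ, f x = ⨍ y, f y ∂μ := by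
  refine ⟨fun heq => ?_, fun hconst => ?_⟩
  · exact (hg.ae_eq_const_or_lt_map_average hgc hs hfs hf hgf).resolve_right heq.not_lt
  · rw [average_congr (hconst.mono fun x hx => congrArg g hx), average_const]

theorem integrable_withDensity_ofReal_iff (hw : AEMeasurable w μ) (hw0 : 0 ≤ᵐ[μ] w) :
    Integrable f (μ.withDensity fun x => ENNReal.ofReal (w x)) ↔
      Integrable (fun x => w x • f x) μ := by
  rw [integrable_withDensity_iff_integrable_smul₀' hw.ennreal_ofReal (by simp)]
  refine integrable_congr ?_
  filter_upwards [hw0] with x hx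
  rw [ENNReal.toReal_ofReal hx]

theorem integral_withDensity_ofReal (hw : AEMeasurable w μ) (hw0 : 0 ≤ᵐ[μ] w) (f : X → E) :
    ∫ x, f x ∂μ.withDensity (fun x => ENNReal.ofReal (w x)) = ∫ x, w x • f x ∂μ := by
  rw [integral_withDensity_eq_integral_toReal_smul₀ hw.ennreal_ofReal (by simp)]
  refine integral_congr_ae ?_
  filter_upwards [hw0] with x hx
  rw [ENNReal.toReal_ofReal hx]

theorem average_withDensity_ofReal (hw : AEMeasurable w μ) (hw0 : 0 ≤ᵐ[μ] w) (f : X → E) :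
    ⨍ x, f x ∂μ.withDensity (fun x => ENNReal.ofReal (w x)) =
      (∫ x, w x ∂μ)⁻¹ • ∫ x, w x • f x ∂μ := by
  have total_mass : (μ.withDensity fun x => ENNReal.ofReal (w x)).real Set.univ = ∫ x, w x ∂μ := by
    simpa using integral_withDensity_ofReal hw hw0 fun _ => (1 : ℝ)
  rw [average_eq, total_mass, integral_withDensity_ofReal hw hw0]

theorem ae_withDensity_ofReal_iff (hw : AEMeasurable w μ) (hw0 : 0 ≤ᵐ[μ] w) {p : X → Prop} :
    (∀ᵐ x ∂μ.withDensity (fun x => ENNReal.ofReal (w x)), p x) ↔ ∀ᵐ x ∂μ, w x ≠ 0 → p x := by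
  rw [ae_withDensity_iff' hw.ennreal_ofReal]
  refine Filter.eventually_congr ?_
  filter_upwards [hw0] with x hx
  rw [Pi.zero_apply] at hx
  rw [Ne, ENNReal.ofReal_eq_zero, hx.ge_iff_eq']

theorem integral_mul_comp_eq_mul_map_iff_of_strictConcaveOn [CompleteSpace E]
    (hg : StrictConcaveOn ℝ s g) (hgc : ContinuousOn g s) (hs : IsClosed s)
    (hw : Integrable w μ) (hw0 : 0 ≤ᵐ[μ] w) (hw_ne : ∫ x, w x ∂μ ≠ 0)
    (hfs : ∀ᵐ x ∂μ, w x ≠ 0 → f x ∈ s) (hf : Integrable (fun x => w x • f x) μ)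
    (hgf : Integrable (fun x => w x * g (f x)) μ) :
    ∫ x, w x * g (f x) ∂μ = (∫ x, w x ∂μ) * g ((∫ x, w x ∂μ)⁻¹ • ∫ x, w x • f x ∂μ) ↔
      ∀ᵐ x ∂μ, w x ≠ 0 → f x = (∫ y, w y ∂μ)⁻¹ • ∫ y, w y • f y ∂μ := by
  have hwm := hw.aemeasurable
  let ν := μ.withDensity fun x => ENNReal.ofReal (w x)
  have : IsFiniteMeasure ν := isFiniteMeasure_withDensity_ofReal hw.hasFiniteIntegral
  have : NeZero ν := ⟨fun hν => hw_ne <| by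
    simpa [ν, hν] using (integral_withDensity_ofReal hwm hw0 fun _ => (1 : ℝ)).symm⟩
  have jensen := average_comp_eq_map_average_iff_of_strictConcaveOn (μ := ν) hg hgc hs
    ((ae_withDensity_ofReal_iff hwm hw0).2 hfs)
    ((integrable_withDensity_ofReal_iff hwm hw0).2 hf)
    ((integrable_withDensity_ofReal_iff hwm hw0).2 hgf)
  rw [ae_withDensity_ofReal_iff hwm hw0, average_withDensity_ofReal hwm hw0,
    average_withDensity_ofReal hwm hw0] at jensen
  simpa only [smul_eq_mul, inv_mul_eq_iff_eq_mul₀ hw_ne] using jensen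

end Jensen

section Discriminator

theorem mul_log_add_mul_log_eq_neg_mul_binEntropy {a b : ℝ} (ha : 0 ≤ a) (hb : 0 ≤ b) :
    a * log (a / (a + b)) + b * log (1 - a / (a + b)) = -((a + b) * binEntropy (a / (a + b))) := by
  obtain hab | hab := eq_or_ne (a + b) 0
  · obtain ⟨rfl, rfl⟩ := (add_eq_zero_iff_of_nonneg ha hb).1 hab
    simp
  · have ha_eq : a = (a + b) * (a / (a + b)) := (mul_div_cancel₀ a hab).symm
    have hb_eq : b = (a + b) * (1 - a / (a + b)) := by field_simp; ring
    simp only [binEntropy, log_inv]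
    linear_combination log (a / (a + b)) * ha_eq + log (1 - a / (a + b)) * hb_eq

variable {X : Type*} {a b : X → ℝ}

/-- The discriminator `D*` maximising the GAN value when `a` and `b` are the densities of the
samples to be accepted and rejected, each weighted by its class prior. It is `0` where both vanish,
a value that has no effect on `ganValue`. -/
noncomputable def optimalDiscriminator (a b : X → ℝ) (x : X) : ℝ :=
  a x / (a x + b x)

theorem optimalDiscriminator_mem_Icc {x : X} (ha : 0 ≤ a x) (hb : 0 ≤ b x) :
    optimalDiscriminator a b x ∈ Set.Icc 0 1 :=
  ⟨div_nonneg ha (add_nonneg ha hb),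
    div_le_one_of_le₀ (le_add_of_nonneg_right hb) (add_nonneg ha hb)⟩

theorem add_mul_optimalDiscriminator {x : X} (ha : 0 ≤ a x) (hb : 0 ≤ b x) :
    (a x + b x) * optimalDiscriminator a b x = a x :=
  mul_div_cancel_of_imp' fun hab => ((add_eq_zero_iff_of_nonneg ha hb).1 hab).1

theorem optimalDiscriminator_eq_iff {x : X} {c : ℝ} (ha : 0 ≤ a x) (hb : 0 ≤ b x) :
    (a x + b x ≠ 0 → optimalDiscriminator a b x = c) ↔ a x = c * (a x + b x) := by
  obtain hab | hab := eq_or_ne (a x + b x) 0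
  · obtain ⟨hax, hbx⟩ := (add_eq_zero_iff_of_nonneg ha hb).1 hab
    simp [hax, hbx]
  · rw [imp_iff_right hab, optimalDiscriminator, div_eq_iff hab]

variable [MeasurableSpace X] {μ : Measure X}

/-- The GAN value `V(D)` of a discriminator `D`, where `a` and `b` are the densities of the samples
to be accepted and rejected, each weighted by its class prior. -/
noncomputable def ganValue (μ : Measure X) (a b D : X → ℝ) : ℝ :=
  ∫ x, (a x * log (D x) + b x * log (1 - D x)) ∂μ

theorem ganValue_optimalDiscriminator (ha : 0 ≤ᵐ[μ] a) (hb : 0 ≤ᵐ[μ] b) :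
    ganValue μ a b (optimalDiscriminator a b) =
      -∫ x, (a x + b x) * binEntropy (optimalDiscriminator a b x) ∂μ := by
  rw [ganValue, ← integral_neg]
  refine integral_congr_ae ?_
  filter_upwards [ha, hb] with x hax hbx
  exact mul_log_add_mul_log_eq_neg_mul_binEntropy hax hbx

theorem integrable_mul_binEntropy {w f : X → ℝ} (hw : Integrable w μ)
    (hf : AEStronglyMeasurable f μ) (hf01 : ∀ᵐ x ∂μ, f x ∈ Set.Icc 0 1) :
    Integrable (fun x => w x * binEntropy (f x)) μ := by
  refine hw.mul_bdd (c := log 2) (binEntropy_continuous.comp_aestronglyMeasurable hf) ?_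
  filter_upwards [hf01] with x hx
  rw [norm_of_nonneg (binEntropy_nonneg hx.1 hx.2)]
  exact binEntropy_le_log_two

theorem ganValue_optimalDiscriminator_eq_iff (ha : Integrable a μ) (hb : Integrable b μ)
    (ha0 : 0 ≤ᵐ[μ] a) (hb0 : 0 ≤ᵐ[μ] b) (hab : ∫ x, (a x + b x) ∂μ ≠ 0) :
    ganValue μ a b (optimalDiscriminator a b) =
        -((∫ x, (a x + b x) ∂μ) * binEntropy ((∫ x, a x ∂μ) / ∫ x, (a x + b x) ∂μ)) ↔
      ∀ᵐ x ∂μ, a x = (∫ y, a y ∂μ) / (∫ y, (a y + b y) ∂μ) * (a x + b x) := by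
  have hab0 : 0 ≤ᵐ[μ] fun x => a x + b x := by
    filter_upwards [ha0, hb0] with x hax hbx using add_nonneg hax hbx
  have hD01 : ∀ᵐ x ∂μ, optimalDiscriminator a b x ∈ Set.Icc 0 1 := by
    filter_upwards [ha0, hb0] with x hax hbx using optimalDiscriminator_mem_Icc hax hbx
  have hDm : AEStronglyMeasurable (optimalDiscriminator a b) μ :=
    (ha.aemeasurable.div (ha.add hb).aemeasurable).aestronglyMeasurable
  have hwD : (fun x => (a x + b x) • optimalDiscriminator a b x) =ᵐ[μ] a := by
    filter_upwards [ha0, hb0] with x hax hbx using add_mul_optimalDiscriminator hax hbx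
  have jensen := integral_mul_comp_eq_mul_map_iff_of_strictConcaveOn
    strictConcave_binEntropy binEntropy_continuous.continuousOn isClosed_Icc (ha.add hb) hab0 hab
    (hD01.mono fun _ hx _ => hx) (ha.congr hwD.symm)
    (integrable_mul_binEntropy (ha.add hb) hDm hD01)
  simp only [Pi.add_apply] at jensen
  rw [integral_congr_ae hwD, smul_eq_mul, inv_mul_eq_div] at jensen
  rw [ganValue_optimalDiscriminator ha0 hb0, neg_inj, jensen]
  refine Filter.eventually_congr ?_
  filter_upwards [ha0, hb0] with x hax hbx using optimalDiscriminator_eq_iff hax hbx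

end Discriminator

theorem global_optimum_general {X : Type*} [MeasurableSpace X] (μ : Measure X)
    (πp : ℝ) (hπ0 : 0 < πp) (hπ1 : πp ≤ 1)
    (pp pn pg : X → ℝ)
    (hpp0 : 0 ≤ᵐ[μ] pp) (hpn0 : 0 ≤ᵐ[μ] pn) (hpg0 : 0 ≤ᵐ[μ] pg)
    (hppint : ∫ x, pp x ∂μ = 1) (hpnint : ∫ x, pn x ∂μ = 1) (hpgint : ∫ x, pg x ∂μ = 1)
    (pu : X → ℝ) (hpu : pu = fun x => πp * pp x + (1 - πp) * pn x)
    (Dstar : X → ℝ) (hDstar : Dstar = fun x => πp * pp x / (pu x + pg x)) :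
    ((∫ x, (πp * pp x * Real.log (Dstar x) +
        ((1 - πp) * pn x + pg x) * Real.log (1 - Dstar x)) ∂μ =
      -2 * Real.binEntropy (πp / 2)) ↔ (∀ᵐ x ∂μ, pp x = (pu x + pg x) / 2)) ∧
    ((∀ᵐ x ∂μ, pp x = (pu x + pg x) / 2) →
      (∀ᵐ x ∂μ, pu x + pg x ≠ 0 → Dstar x = πp / 2)) := by
  let a x := πp * pp x
  let b x := (1 - πp) * pn x + pg x
  have hab x : pu x + pg x = a x + b x := by simp only [hpu, a, b, add_assoc]
  have hD : Dstar = optimalDiscriminator a b := by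
    simp only [hDstar, hab]
    rfl
  have hpp : Integrable pp μ := integrable_of_integral_eq_one hppint
  have hpn : Integrable pn μ := integrable_of_integral_eq_one hpnint
  have hpg : Integrable pg μ := integrable_of_integral_eq_one hpgint
  have ha : Integrable a μ := hpp.const_mul πp
  have hb : Integrable b μ := (hpn.const_mul (1 - πp)).add hpg
  have ha0 : 0 ≤ᵐ[μ] a := by
    filter_upwards [hpp0] with x hx using mul_nonneg hπ0.le hx
  have hb0 : 0 ≤ᵐ[μ] b := by
    filter_upwards [hpn0, hpg0] with x hnx hgx
      using add_nonneg (mul_nonneg (sub_nonneg.2 hπ1) hnx) hgx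
  have a_mass : ∫ x, a x ∂μ = πp := by rw [integral_const_mul, hppint, mul_one]
  have ab_mass : ∫ x, (a x + b x) ∂μ = 2 := by
    rw [integral_add ha hb, a_mass, integral_add (hpn.const_mul _) hpg, integral_const_mul,
      hpnint, hpgint]
    ring
  have hmix x : a x = πp / 2 * (a x + b x) ↔ pp x = (pu x + pg x) / 2 := by
    rw [hab, div_mul_eq_mul_div, mul_div_assoc, mul_right_inj' hπ0.ne']
  have hvalue := ganValue_optimalDiscriminator_eq_iff ha hb ha0 hb0 (by simp [ab_mass])
  rw [a_mass, ab_mass, ← neg_mul] at hvalue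
  rw [hD]
  simp only [← hmix]
  refine ⟨hvalue, fun h => ?_⟩
  filter_upwards [h, ha0, hb0] with x hx hax hbx
  rw [hab]
  exact (optimalDiscriminator_eq_iff hax hbx).2 hx

theorem global_optimum {X : Type*} [MeasurableSpace X] (μ : Measure X) [SigmaFinite μ]
    (πp : ℝ) (hπ0 : 0 < πp) (hπ1 : πp < 1)
    (pp pn pg : X → ℝ)
    (hppm : Measurable pp) (hpnm : Measurable pn) (hpgm : Measurable pg)
    (hpp0 : ∀ x, 0 ≤ pp x) (hpn0 : ∀ x, 0 ≤ pn x) (hpg0 : ∀ x, 0 ≤ pg x)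
    (hppint : ∫ x, pp x ∂μ = 1) (hpnint : ∫ x, pn x ∂μ = 1) (hpgint : ∫ x, pg x ∂μ = 1)
    (hae : ∀ᵐ x ∂μ, 0 < pp x ∧ 0 < (1 - πp) * pn x + pg x)
    (pu : X → ℝ) (hpu : pu = fun x => πp * pp x + (1 - πp) * pn x)
    (Dstar : X → ℝ) (hDstar : Dstar = fun x => πp * pp x / (pu x + pg x))
    (hint1 : Integrable (fun x =>
      pp x * Real.log (pp x / ((pu x + pg x) / 2))) μ)
    (hint2 : Integrable (fun x =>
      (((1 - πp) * pn x + pg x) / (2 - πp)) *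
        Real.log ((((1 - πp) * pn x + pg x) / (2 - πp)) / ((pu x + pg x) / 2))) μ) :
    ((∫ x, (πp * pp x * Real.log (Dstar x) +
        ((1 - πp) * pn x + pg x) * Real.log (1 - Dstar x)) ∂μ =
      -2 * Real.binEntropy (πp / 2)) ↔ (∀ᵐ x ∂μ, pp x = (pu x + pg x) / 2)) ∧
    ((∀ᵐ x ∂μ, pp x = (pu x + pg x) / 2) → (∀ᵐ x ∂μ, Dstar x = πp / 2)) := by
  refine (global_optimum_general μ πp hπ0 hπ1.le pp pn pg (.of_forall hpp0) (.of_forall hpn0)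
    (.of_forall hpg0) hppint hpnint hpgint pu hpu Dstar hDstar).imp_right fun hD hmix => ?_
  filter_upwards [hae, hD hmix] with x ⟨hpx, hcx⟩ hDx
  exact hDx (by rw [hpu, add_assoc]; positivity)
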